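/- Let N ≥ 2 be a natural number and let P ⊆ ℝᴺ be a compact convex polytope (the convex hull of a finite set of points) with nonempty interior, having exactly m facets, where m ≥ 3. Then the number of vertices (extreme points) of P is at most Λ(N, m). -/

import Mathlib

/-!
The polytope is the intersection of the half-spaces of its `m` facets: a generic segment leaving `P`
crosses its boundary in a facet (`exists_facet_separating`). Its vertices are therefore points where
the tight normals span, and a generic perturbation of the right-hand sides yields a simple bounded
polyhedron with at least as many vertices (`exists_simple_perturbation`).

For a simple polyhedron McMullen's argument applies. Let `h k` be the number of vertices with
exactly `k` edges along which a generic objective `c` increases. As each face has a unique vertex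
maximising `c` on it, the face numbers determine `h`, so `h` does not depend on `c`
(`hNum_eq`). Replacing `c` by `-c` gives `h (N - k) = h k`, and comparing `c` with objectives that
are maximal on a given facet gives `(N - k) h k + (k + 1) h (k + 1) ≤ m h k` (`hNum_step`). Hence
`h k ≤ choose (m - N - 1 + k) k`, and summing over `k`, with the symmetry for `k > N / 2`, gives
`2 * h₁ (m - 1) (N / 2)` for odd `N` and `h₁ m (N / 2) + h₂ (m - 1) (N / 2)` for even `N`.

Finally, `r₁₁` and `r₂₁` are the places from which `h₁ m` and `h₂ m` decrease, so truncating at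
`N / 2` keeps the values of `h₁₁₁` and `h₂₂₁` above those at `N / 2` (`le_Lam`).
-/

/-- `h₁(m,r) := choose(m−r, r)` (natural-number subtraction). -/
def h₁ (m r : ℕ) : ℕ := Nat.choose (m - r) r

/-- `h₂(m,r) := choose(m−r, r−1)` (natural-number subtraction). -/
def h₂ (m r : ℕ) : ℕ := Nat.choose (m - r) (r - 1)

/-- `r₁₁(m) := (5m−3−√(5m²+10m+9))/10`. -/
noncomputable def r₁₁ (m : ℕ) : ℝ :=
  (5 * (m : ℝ) - 3 - Real.sqrt (5 * (m : ℝ) ^ 2 + 10 * (m : ℝ) + 9)) / 10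

/-- `r₂₁(m) := (5m+2−√(5m²+4))/10`. -/
noncomputable def r₂₁ (m : ℕ) : ℝ :=
  (5 * (m : ℝ) + 2 - Real.sqrt (5 * (m : ℝ) ^ 2 + 4)) / 10

noncomputable def h₁₁₁ (N m : ℕ) : ℕ :=
  max (h₁ m (min ⌊r₁₁ m⌋₊ (N / 2))) (h₁ m (min ⌈r₁₁ m⌉₊ (N / 2)))

noncomputable def h₂₂₁ (N m : ℕ) : ℕ :=
  max (h₂ m (min ⌊r₂₁ m⌋₊ (N / 2))) (h₂ m (min ⌈r₂₁ m⌉₊ (N / 2)))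

/-- The upper bound function `Λ(N,m)`. -/
noncomputable def Lam (N m : ℕ) : ℕ :=
  max (2 * h₁₁₁ N (m - 1)) (h₁₁₁ N m + h₂₂₁ N (m - 1))

/-- `H` is a supporting hyperplane of `P`. -/
def IsSupportingHyperplane {N : ℕ} (P H : Set (EuclideanSpace ℝ (Fin N))) : Prop :=
  ∃ (f : EuclideanSpace ℝ (Fin N) →ₗ[ℝ] ℝ) (c : ℝ), f ≠ 0 ∧
    H = {x | f x = c} ∧ (∀ x ∈ P, f x ≤ c) ∧ ∃ x ∈ P, f x = c

/-- A face of `P`: an intersection of `P` with a supporting hyperplane. -/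
def IsFace {N : ℕ} (P F : Set (EuclideanSpace ℝ (Fin N))) : Prop :=
  ∃ H, IsSupportingHyperplane P H ∧ F = P ∩ H

/-- A facet of `P`: a face whose affine span has dimension `N - 1`. -/
def IsFacet (N : ℕ) (P F : Set (EuclideanSpace ℝ (Fin N))) : Prop :=
  IsFace P F ∧ Module.finrank ℝ (affineSpan ℝ F).direction = N - 1

open Filter Topology

/-! ### Counting vertices through the `h`-vector -/

/-- The combinatorial shadow of a generic linear objective `c` on a simple polyhedron. A vertex is
recorded by its set `B` of facets, and `J B ⊆ B` consists of the facets such that `c` increases along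
the edge leaving that facet. Each nonempty face, given by the set `S` of facets containing it, has
exactly one vertex `B` with `J B ⊆ S`, the one maximising `c`. -/
structure IsOrientation {ι : Type*} [DecidableEq ι] (𝓑 : Finset (Finset ι))
    (J : Finset ι → Finset ι) : Prop where
  subset : ∀ B ∈ 𝓑, J B ⊆ B
  existsUnique : ∀ S : Finset ι, (∃ B ∈ 𝓑, S ⊆ B) → ∃! B, B ∈ 𝓑 ∧ J B ⊆ S ∧ S ⊆ B

/-- The `k`-th entry of the `h`-vector: the number of vertices with exactly `k` edges along which
the objective increases. -/
def hNum {ι : Type*} (𝓑 : Finset (Finset ι)) (J : Finset ι → Finset ι) (k : ℕ) : ℕ :=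
  (𝓑.filter fun B => (J B).card = k).card

lemma card_interval {ι : Type*} [DecidableEq ι] (I B : Finset ι) (h : I ⊆ B) (s : ℕ)
    (hs : I.card ≤ s) :
    ((B.powersetCard s).filter fun S => I ⊆ S).card =
      (B.card - I.card).choose (s - I.card) := by
  rw [← Finset.card_sdiff_of_subset h, ← Finset.card_powersetCard]
  refine Finset.card_nbij' (fun S => S \ I) (fun S => S ∪ I) ?_ ?_ ?_ ?_ <;> intro S hS <;>
    simp only [Finset.mem_coe, Finset.mem_filter, Finset.mem_powersetCard] at hS ⊢
  · exact ⟨Finset.sdiff_subset_sdiff hS.1.1 le_rfl, by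
      rw [Finset.card_sdiff_of_subset hS.2, hS.1.2]⟩
  · refine ⟨⟨Finset.union_subset (hS.1.trans Finset.sdiff_subset) h, ?_⟩,
      Finset.subset_union_right⟩
    rw [Finset.card_union_of_disjoint
      (Finset.disjoint_of_subset_left hS.1 Finset.sdiff_disjoint), hS.2]
    omega
  · exact Finset.sdiff_union_of_subset hS.2
  · exact Finset.union_sdiff_cancel_right
      (Finset.disjoint_of_subset_left hS.1 Finset.sdiff_disjoint)

/-- The number of faces of codimension `s` in terms of the `h`-vector: each face is charged to its
unique maximal vertex. -/
lemma card_faces {ι : Type*} [Fintype ι] [DecidableEq ι] {𝓑 : Finset (Finset ι)} {N : ℕ}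
    (hcard : ∀ B ∈ 𝓑, B.card = N) {J : Finset ι → Finset ι} (hJ : IsOrientation 𝓑 J) (s : ℕ) :
    ((Finset.univ.powersetCard s).filter fun S : Finset ι => ∃ B ∈ 𝓑, S ⊆ B).card =
      ∑ j ∈ Finset.range (s + 1), hNum 𝓑 J j * (N - j).choose (s - j) := by
  have h1 : ((Finset.univ.powersetCard s).filter fun S : Finset ι => ∃ B ∈ 𝓑, S ⊆ B) =
      (𝓑.filter fun B => (J B).card ∈ Finset.range (s + 1)).biUnion
        fun B => (B.powersetCard s).filter fun S => J B ⊆ S := by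
    ext S
    simp only [Finset.mem_filter, Finset.mem_powersetCard, Finset.subset_univ, true_and,
      Finset.mem_biUnion, Finset.mem_range]
    constructor
    · rintro ⟨hS, hB⟩
      obtain ⟨B, ⟨hB, h2, h3⟩, -⟩ := hJ.existsUnique S hB
      have := Finset.card_le_card h2
      exact ⟨B, ⟨hB, by omega⟩, ⟨h3, hS⟩, h2⟩
    · rintro ⟨B, ⟨hB, -⟩, ⟨h3, hS⟩, -⟩
      exact ⟨hS, B, hB, h3⟩
  rw [h1, Finset.card_biUnion]
  · rw [← Finset.sum_fiberwise_of_maps_to (g := fun B => (J B).card) (t := Finset.range (s + 1))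
      (by intro B hB; exact (Finset.mem_filter.1 hB).2)]
    refine Finset.sum_congr rfl fun j hj => ?_
    rw [hNum, ← smul_eq_mul, ← Finset.sum_const, Finset.filter_filter]
    have : (𝓑.filter fun B => (J B).card ∈ Finset.range (s + 1) ∧ (J B).card = j) =
        𝓑.filter fun B => (J B).card = j := by
      refine Finset.filter_congr fun B _ => ?_
      constructor
      · exact fun h => h.2
      · rintro rfl; exact ⟨hj, rfl⟩
    rw [this]
    refine Finset.sum_congr rfl fun B hB => ?_
    rw [Finset.mem_filter] at hB
    rw [card_interval _ _ (hJ.subset B hB.1) _ (by rw [Finset.mem_range] at hj; omega),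
      hcard B hB.1, hB.2]
  · intro B hB B' hB' hne
    rw [Function.onFun, Finset.disjoint_left]
    intro S hS hS'
    simp only [Finset.mem_filter, Finset.mem_powersetCard] at hS hS'
    rw [Finset.mem_coe, Finset.mem_filter] at hB hB'
    exact hne ((hJ.existsUnique S ⟨B, hB.1, hS.1.1⟩).unique ⟨hB.1, hS.2, hS.1.1⟩
      ⟨hB'.1, hS'.2, hS'.1.1⟩)

/-- The `h`-vector does not depend on the orientation, since the face numbers determine it through
the unitriangular system of `card_faces`. -/
lemma hNum_eq {ι : Type*} [Fintype ι] [DecidableEq ι] {𝓑 : Finset (Finset ι)} {N : ℕ}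
    (hcard : ∀ B ∈ 𝓑, B.card = N) {J J' : Finset ι → Finset ι} (hJ : IsOrientation 𝓑 J)
    (hJ' : IsOrientation 𝓑 J') (s : ℕ) : hNum 𝓑 J s = hNum 𝓑 J' s := by
  induction s using Nat.strong_induction_on with
  | _ s ih =>
    have h := (card_faces hcard hJ s).symm.trans (card_faces hcard hJ' s)
    rw [Finset.sum_range_succ, Finset.sum_range_succ,
      Finset.sum_congr rfl fun j hj => by rw [ih j (Finset.mem_range.1 hj)]] at h
    simpa using h

/-- The Dehn–Sommerville relations, obtained by reversing the orientation. -/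
lemma hNum_symm {ι : Type*} [Fintype ι] [DecidableEq ι] {𝓑 : Finset (Finset ι)} {N : ℕ}
    (hcard : ∀ B ∈ 𝓑, B.card = N) {J J' : Finset ι → Finset ι} (hJ : IsOrientation 𝓑 J)
    (hJ' : IsOrientation 𝓑 J') (hopp : ∀ B ∈ 𝓑, J' B = B \ J B) (k : ℕ) (hk : k ≤ N) :
    hNum 𝓑 J (N - k) = hNum 𝓑 J k := by
  rw [hNum_eq hcard hJ hJ' k, hNum, hNum]
  congr 1
  refine Finset.filter_congr fun B hB => ?_
  have := Finset.card_le_card (hJ.subset B hB)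
  rw [hopp B hB, Finset.card_sdiff_of_subset (hJ.subset B hB), hcard B hB]
  rw [hcard B hB] at this
  omega

/-- McMullen's inequality, by double counting the pairs `(j, B)` with `j ∈ B` and
`(J B).erase j` of size `k`. For fixed `j` there are at most `hNum 𝓑 J k` of them: by `hlink` they
inject into the vertices with `k` elements for another orientation. A fixed `B` contributes
`N - k` if `J B` has size `k` (take `j ∉ J B`) and `k + 1` if it has size `k + 1`
(take `j ∈ J B`). -/
lemma hNum_step {ι : Type*} [Fintype ι] [DecidableEq ι] {𝓑 : Finset (Finset ι)} {N : ℕ}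
    (hcard : ∀ B ∈ 𝓑, B.card = N) {J : Finset ι → Finset ι} (hJ : IsOrientation 𝓑 J)
    (hlink : ∀ j, ∃ J', IsOrientation 𝓑 J' ∧ ∀ B ∈ 𝓑, j ∈ B → J' B = (J B).erase j) (k : ℕ) :
    (N - k) * hNum 𝓑 J k + (k + 1) * hNum 𝓑 J (k + 1) ≤ Fintype.card ι * hNum 𝓑 J k := by
  have h1 : ∑ j : ι, (𝓑.filter fun B => j ∈ B ∧ ((J B).erase j).card = k).card ≤
      Fintype.card ι * hNum 𝓑 J k := by
    rw [← smul_eq_mul, ← Finset.card_univ, ← Finset.sum_const]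
    refine Finset.sum_le_sum fun j _ => ?_
    obtain ⟨J', hJ', h⟩ := hlink j
    rw [hNum_eq hcard hJ hJ' k]
    refine Finset.card_le_card fun B hB => ?_
    rw [Finset.mem_filter] at hB ⊢
    exact ⟨hB.1, by rw [h B hB.1 hB.2.1]; exact hB.2.2⟩
  refine le_trans ?_ h1
  have h2 : ∑ j : ι, (𝓑.filter fun B => j ∈ B ∧ ((J B).erase j).card = k).card =
      ∑ B ∈ 𝓑, (Finset.univ.filter fun j => j ∈ B ∧ ((J B).erase j).card = k).card :=
    Finset.sum_card_bipartiteAbove_eq_sum_card_bipartiteBelow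
      (s := Finset.univ) (t := 𝓑) fun j B => j ∈ B ∧ ((J B).erase j).card = k
  have h3 : (N - k) * hNum 𝓑 J k + (k + 1) * hNum 𝓑 J (k + 1) =
      ∑ B ∈ 𝓑, ((if (J B).card = k then N - k else 0) +
        if (J B).card = k + 1 then k + 1 else 0) := by
    rw [Finset.sum_add_distrib, ← Finset.sum_filter, ← Finset.sum_filter, Finset.sum_const,
      Finset.sum_const, smul_eq_mul, smul_eq_mul, hNum, hNum, mul_comm, mul_comm (k + 1)]
  rw [h2, h3]
  refine Finset.sum_le_sum fun B hB => ?_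
  have hsub := hJ.subset B hB
  by_cases hk : (J B).card = k
  · rw [if_pos hk, if_neg (by omega), add_zero, ← hcard B hB, ← hk,
      ← Finset.card_sdiff_of_subset hsub]
    refine Finset.card_le_card fun j hj => ?_
    rw [Finset.mem_sdiff] at hj
    simp [hj.1, Finset.erase_eq_of_notMem hj.2]
  · rw [if_neg hk, zero_add]
    split_ifs with hk1
    · conv_lhs => rw [← hk1]
      refine Finset.card_le_card fun j hj => ?_
      simp [hsub hj, Finset.card_erase_of_mem hj, hk1]
    · exact Nat.zero_le _

lemma sum_choose_diag (e q : ℕ) :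
    ∑ i ∈ Finset.range (q + 1), (e + i).choose i = (e + q + 1).choose q := by
  induction q with
  | zero => simp
  | succ q ih =>
    rw [Finset.sum_range_succ, ih]
    exact (Nat.choose_succ_succ' (e + q + 1) q).symm

/-- The upper bound theorem for families of vertex sets. `J'` is the reversed orientation, and
`hlink` provides for each `j` an orientation whose objective is largest on facet `j`. -/
theorem card_le_of_orientations {ι : Type*} [Fintype ι] [DecidableEq ι] {𝓑 : Finset (Finset ι)}
    {N : ℕ} (hN : 2 ≤ N) (hne : 𝓑.Nonempty)
    (hcard : ∀ B ∈ 𝓑, B.card = N) {J J' : Finset ι → Finset ι} (hJ : IsOrientation 𝓑 J)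
    (hJ' : IsOrientation 𝓑 J') (hopp : ∀ B ∈ 𝓑, J' B = B \ J B)
    (hlink : ∀ j, ∃ J', IsOrientation 𝓑 J' ∧ ∀ B ∈ 𝓑, j ∈ B → J' B = (J B).erase j) :
    ∃ e q : ℕ, (N = 2 * q + 1 ∧ Fintype.card ι = 2 * q + 2 + e ∧
        𝓑.card ≤ 2 * (e + q + 1).choose q) ∨
      (N = 2 * q ∧ 1 ≤ q ∧ Fintype.card ι = 2 * q + 1 + e ∧
        𝓑.card ≤ (e + q + 1).choose q + (e + q).choose (q - 1)) := by
  have hsym := hNum_symm hcard hJ hJ' hopp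
  have hstep := hNum_step hcard hJ hlink
  have h0 : hNum 𝓑 J 0 = 1 := by
    obtain ⟨B, hB⟩ := hne
    obtain ⟨B, ⟨hB, h1, -⟩, hu⟩ := hJ.existsUnique ∅ ⟨B, hB, by simp⟩
    rw [hNum, Finset.card_eq_one]
    refine ⟨B, ?_⟩
    ext B'
    simp only [Finset.mem_filter, Finset.mem_singleton, Finset.card_eq_zero]
    constructor
    · rintro ⟨h, h'⟩
      exact hu B' ⟨h, by simp [h'], by simp⟩
    · rintro rfl
      exact ⟨hB, Finset.subset_empty.1 h1⟩
  -- `hNum_step` at `0` and `N - 1`, with `h_N = h_0 = 1` and `h_{N-1} = h_1`.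
  have hm : N + 1 ≤ Fintype.card ι := by
    have a1 := hstep 0
    have a2 := hstep (N - 1)
    have a3 := hsym 1 (by omega)
    have a4 := hsym 0 (by omega)
    rw [Nat.sub_add_cancel (by omega), a3] at a2
    simp only [Nat.sub_zero, h0] at a1 a4
    rw [a4] at a2
    have : 1 ≤ hNum 𝓑 J 1 := by
      by_contra hc
      have : hNum 𝓑 J 1 = 0 := by omega
      rw [this] at a2
      omega
    simp only [mul_one, zero_add, one_mul] at a1
    omega
  obtain ⟨e, he⟩ := Nat.exists_eq_add_of_le hm
  have hb : ∀ k ≤ N, hNum 𝓑 J k ≤ (e + k).choose k := by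
    intro k
    induction k with
    | zero => intro _; simp [h0]
    | succ k ih =>
      intro hk
      have h1 := ih (by omega)
      have h2 := hstep k
      have h3 : Fintype.card ι = (N - k) + (e + k + 1) := by omega
      rw [h3, add_mul] at h2
      have h4 : (k + 1) * hNum 𝓑 J (k + 1) ≤ (e + k + 1) * hNum 𝓑 J k := by linarith
      have h5 := Nat.add_one_mul_choose_eq (e + k) k
      have h6 : (e + k + 1) * hNum 𝓑 J k ≤ (e + k + 1) * (e + k).choose k :=
        Nat.mul_le_mul_left _ h1
      rw [h5, mul_comm] at h6
      rw [← add_assoc]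
      refine Nat.le_of_mul_le_mul_left (h4.trans ?_) (Nat.succ_pos k)
      linarith
  have htot : 𝓑.card = ∑ k ∈ Finset.range (N + 1), hNum 𝓑 J k := by
    refine Finset.card_eq_sum_card_fiberwise (f := fun B => (J B).card) fun B hB => ?_
    have := Finset.card_le_card (hJ.subset B hB)
    rw [hcard B hB] at this
    simp only [Finset.coe_range, Set.mem_Iio]
    omega
  have hlow : ∀ q ≤ N, ∑ k ∈ Finset.range (q + 1), hNum 𝓑 J k ≤ (e + q + 1).choose q := by
    intro q hq
    rw [← sum_choose_diag]
    exact Finset.sum_le_sum fun k hk => hb k (by rw [Finset.mem_range] at hk; omega)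
  -- The upper half of the `h`-vector is the mirror image of the lower half.
  have hup : ∀ p ≤ N, ∑ k ∈ Finset.range p, hNum 𝓑 J (N + 1 - p + k) =
      ∑ k ∈ Finset.range p, hNum 𝓑 J k := by
    intro p hp
    rw [← Finset.sum_range_reflect]
    refine Finset.sum_congr rfl fun k hk => ?_
    rw [Finset.mem_range] at hk
    rw [← hsym k (by omega)]
    congr 1
    omega
  rcases Nat.even_or_odd' N with ⟨q, hq | hq⟩
  · refine ⟨e, q, Or.inr ⟨hq, by omega, by omega, ?_⟩⟩
    have h1 := hup q (by omega)
    have h2 : N + 1 = (q + 1) + q := by omega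
    rw [htot, h2, Finset.sum_range_add]
    have h3 : N + 1 - q = q + 1 := by omega
    rw [h3] at h1
    rw [h1]
    refine add_le_add (hlow q (by omega)) ?_
    have := hlow (q - 1) (by omega)
    rw [Nat.sub_add_cancel (n := q) (by omega)] at this
    rwa [show e + (q - 1) + 1 = e + q by omega] at this
  · refine ⟨e, q, Or.inl ⟨hq, by omega, ?_⟩⟩
    have h1 := hup (q + 1) (by omega)
    have h2 : N + 1 = (q + 1) + (q + 1) := by omega
    rw [htot, h2, Finset.sum_range_add]
    have h3 : N + 1 - (q + 1) = q + 1 := by omega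
    rw [h3] at h1
    rw [h1]
    have := hlow q (by omega)
    omega

/-! ### Vertices of polyhedra and generic objectives -/

section Polyhedra

variable {ι E : Type*} [Fintype ι] [AddCommGroup E] [Module ℝ E]

/-- `x` lies in the polyhedron given by the inequalities `a i x ≤ b i`. -/
def Feas (a : ι → Module.Dual ℝ E) (b : ι → ℝ) (x : E) : Prop := ∀ i, a i x ≤ b i

open Classical in
/-- The indices of the hyperplanes `a i = b i` through `x`. -/
noncomputable def act (a : ι → Module.Dual ℝ E) (b : ι → ℝ) (x : E) : Finset ι :=
  Finset.univ.filter fun i => a i x = b i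

/-- The normals indexed by `A` separate points, i.e. they span the dual space. A feasible point is a
vertex exactly when its active set has this property. -/
def Separates (a : ι → Module.Dual ℝ E) (A : Finset ι) : Prop := ∀ d, (∀ i ∈ A, a i d = 0) → d = 0

lemma mem_act {a : ι → Module.Dual ℝ E} {b : ι → ℝ} {x : E} {i : ι} :
    i ∈ act a b x ↔ a i x = b i := by simp [act]

/-- Starting from `x₀`, move inside the face of `x₀` without decreasing `c` until a vertex is
reached. The hypothesis `hc` says that `c` decreases along every nonzero recession direction; it
holds vacuously for bounded polyhedra. -/
lemma exists_vertex (a : ι → Module.Dual ℝ E) (b : ι → ℝ) (c : Module.Dual ℝ E)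
    (hc : ∀ d ≠ 0, (∀ i, a i d ≤ 0) → c d < 0) (x₀ : E) (hx₀ : Feas a b x₀) :
    ∃ x, Feas a b x ∧ act a b x₀ ⊆ act a b x ∧ Separates a (act a b x) ∧ c x₀ ≤ c x := by
  induction hn : Fintype.card ι - (act a b x₀).card using Nat.strong_induction_on
    generalizing x₀ with
  | _ n ih =>
  by_cases hsep : Separates a (act a b x₀)
  · exact ⟨x₀, hx₀, subset_rfl, hsep, le_rfl⟩
  obtain ⟨d, hd0, hd, hcd⟩ : ∃ d, d ≠ 0 ∧ (∀ i ∈ act a b x₀, a i d = 0) ∧ 0 ≤ c d := by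
    simp only [Separates, not_forall] at hsep
    obtain ⟨d, hd, hd0⟩ := hsep
    rcases le_total 0 (c d) with h | h
    · exact ⟨d, hd0, hd, h⟩
    · exact ⟨-d, neg_ne_zero.2 hd0, fun i hi => by simp [hd i hi], by simpa using h⟩
  classical
  -- Some inequality bounds the ray in direction `d`; stop at the first hyperplane it meets.
  have hne : (Finset.univ.filter fun i => 0 < a i d).Nonempty := by
    by_contra hemp
    rw [Finset.not_nonempty_iff_eq_empty, Finset.filter_eq_empty_iff] at hemp
    exact absurd (hc d hd0 fun i => not_lt.1 (hemp (Finset.mem_univ i))) (not_lt.2 hcd)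
  obtain ⟨i₀, hi₀, hmin⟩ := Finset.exists_min_image _ (fun i => (b i - a i x₀) / a i d) hne
  rw [Finset.mem_filter] at hi₀
  set s := (b i₀ - a i₀ x₀) / a i₀ d with hs
  have hs0 : 0 ≤ s := div_nonneg (sub_nonneg.2 (hx₀ i₀)) hi₀.2.le
  have hfeas : Feas a b (x₀ + s • d) := by
    intro i
    rw [map_add, map_smul, smul_eq_mul]
    rcases le_or_gt (a i d) 0 with h | h
    · nlinarith [hx₀ i]
    · have := hmin i (by simp [h])
      rw [le_div_iff₀ h] at this
      linarith
  have hsub : act a b x₀ ⊆ act a b (x₀ + s • d) := by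
    intro i hi
    rw [mem_act, map_add, map_smul, hd i hi, smul_zero, add_zero]
    exact mem_act.1 hi
  have hmem : i₀ ∈ act a b (x₀ + s • d) := by
    rw [mem_act, map_add, map_smul, smul_eq_mul, hs, div_mul_cancel₀ _ hi₀.2.ne']
    ring
  have hlt : (act a b x₀).card < (act a b (x₀ + s • d)).card := by
    refine Finset.card_lt_card (Finset.ssubset_iff_subset_ne.2 ⟨hsub, fun h => ?_⟩)
    rw [← h] at hmem
    exact hi₀.2.ne' (hd _ hmem)
  have hle : (act a b (x₀ + s • d)).card ≤ Fintype.card ι := Finset.card_le_univ _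
  obtain ⟨x, h1, h2, h3, h4⟩ := ih _ (by omega) _ hfeas rfl
  refine ⟨x, h1, hsub.trans h2, h3, le_trans ?_ h4⟩
  rw [map_add, map_smul, smul_eq_mul]
  nlinarith

/-- Linear independence of the normals indexed by `A`, stated with coefficients defined on all of
`ι`. -/
def Indep (a : ι → Module.Dual ℝ E) (A : Finset ι) : Prop :=
  ∀ μ : ι → ℝ, ∑ i ∈ A, μ i • a i = 0 → ∀ i ∈ A, μ i = 0

/-- If the normals indexed by `A` form a basis of the dual space, then `d` is the dual basis; `-d i`
is the direction of the edge of the vertex that leaves the hyperplane `i`. -/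
lemma exists_dirs [FiniteDimensional ℝ E] [DecidableEq ι] {a : ι → Module.Dual ℝ E}
    {A : Finset ι} (hsep : Separates a A) (hind : Indep a A) :
    A.card = Module.finrank ℝ E ∧ ∃ d : ι → E,
      (∀ i ∈ A, ∀ j ∈ A, a j (d i) = if i = j then 1 else 0) ∧
      ∀ x, x = ∑ i ∈ A, a i x • d i := by
  let L : E →ₗ[ℝ] (A → ℝ) := LinearMap.pi fun i => a i
  have hinj : Function.Injective L := by
    rw [injective_iff_map_eq_zero]
    intro x hx
    exact hsep x fun i hi => congr_fun hx ⟨i, hi⟩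
  have hsurj : Function.Surjective L := by
    rw [← LinearMap.range_eq_top]
    by_contra hne
    obtain ⟨f, hf0, hf⟩ := Submodule.exists_le_ker_of_lt_top _ (lt_top_iff_ne_top.2 hne)
    apply hf0
    have key : ∀ i : A, f (Pi.single i 1) = 0 := by
      let μ : ι → ℝ := fun i => if h : i ∈ A then f (Pi.single ⟨i, h⟩ 1) else 0
      have hμ : ∀ i : A, μ i = f (Pi.single i 1) := fun i => by simp [μ]
      intro i
      rw [← hμ]
      refine hind μ ?_ i i.2
      ext x
      have h1 : f (L x) = 0 := hf ⟨x, rfl⟩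
      rw [LinearMap.pi_apply_eq_sum_univ f (L x)] at h1
      rw [← Finset.sum_coe_sort]
      simp only [LinearMap.sum_apply, LinearMap.smul_apply, LinearMap.zero_apply, hμ]
      rw [← h1]
      refine Finset.sum_congr rfl fun j _ => ?_
      rw [smul_eq_mul, smul_eq_mul, mul_comm]
      congr 2
      ext k
      simp [Pi.single_apply, eq_comm]
    refine LinearMap.pi_ext' fun i => ?_
    ext
    simpa using key i
  refine ⟨?_, ?_⟩
  · have := (LinearEquiv.ofBijective L ⟨hinj, hsurj⟩).finrank_eq
    rw [this]; simp
  · choose g hg using hsurj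
    refine ⟨fun i => if h : i ∈ A then g (Pi.single ⟨i, h⟩ 1) else 0, ?_, ?_⟩
    · have h1 : ∀ i ∈ A, ∀ j ∈ A, a j (if h : i ∈ A then g (Pi.single ⟨i, h⟩ 1) else 0) =
        if i = j then 1 else 0 := by
        intro i hi j hj
        have := congr_fun (hg (Pi.single ⟨i, hi⟩ 1)) ⟨j, hj⟩
        rw [dif_pos hi]
        refine this.trans ?_
        simp [Pi.single_apply, eq_comm]
      exact h1
    · intro x
      rw [← sub_eq_zero]
      refine hsep _ fun j hj => ?_
      have h1 : ∀ i ∈ A, a i x • a j (if h : i ∈ A then g (Pi.single ⟨i, h⟩ 1) else 0) =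
          if i = j then a j x else 0 := by
        intro i hi
        have := congr_fun (hg (Pi.single ⟨i, hi⟩ 1)) ⟨j, hj⟩
        rw [dif_pos hi]
        have h2 : a j (g (Pi.single ⟨i, hi⟩ 1)) = if i = j then 1 else 0 := by
          refine this.trans ?_
          simp [Pi.single_apply, eq_comm]
        rw [h2]
        split_ifs with h <;> simp [h]
      rw [map_sub, map_sum]
      simp only [map_smul]
      rw [Finset.sum_congr rfl h1, Finset.sum_ite_eq', if_pos hj, sub_self]

lemma eventually_ne_zero (α β : ℝ) (h : β ≠ 0) : ∀ᶠ ε in 𝓝[>] (0 : ℝ), α + ε * β ≠ 0 := by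
  by_cases hα : α = 0
  · filter_upwards [self_mem_nhdsWithin] with ε hε
    rw [hα, zero_add]
    exact mul_ne_zero (ne_of_gt hε) h
  · have : Tendsto (fun ε : ℝ => α + ε * β) (𝓝 0) (𝓝 (α + 0 * β)) :=
      (Continuous.tendsto (by fun_prop) 0)
    rw [zero_mul, add_zero] at this
    exact (this.mono_left nhdsWithin_le_nhds).eventually_ne hα

lemma eventually_pos (α β : ℝ) (h : 0 < α) : ∀ᶠ ε in 𝓝[>] (0 : ℝ), 0 < α + ε * β := by
  have : Tendsto (fun ε : ℝ => α + ε * β) (𝓝 0) (𝓝 (α + 0 * β)) :=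
    (Continuous.tendsto (by fun_prop) 0)
  rw [zero_mul, add_zero] at this
  exact (this.mono_left nhdsWithin_le_nhds).eventually (lt_mem_nhds h)

open Classical in
/-- The vertices of a polyhedron, each recorded by its active set, which determines it. -/
noncomputable def vertexSets (a : ι → Module.Dual ℝ E) (b : ι → ℝ) : Finset (Finset ι) :=
  Finset.univ.filter fun B => Separates a B ∧ ∃ x, Feas a b x ∧ act a b x = B

lemma mem_vertexSets {a : ι → Module.Dual ℝ E} {b : ι → ℝ} {B : Finset ι} :
    B ∈ vertexSets a b ↔ Separates a B ∧ ∃ x, Feas a b x ∧ act a b x = B := by simp [vertexSets]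

lemma Separates.eq_of_act {a : ι → Module.Dual ℝ E} {b : ι → ℝ} {A : Finset ι} {x y : E}
    (h : Separates a A) (hx : A ⊆ act a b x) (hy : A ⊆ act a b y) : x = y := by
  rw [← sub_eq_zero]
  refine h _ fun i hi => ?_
  rw [map_sub, mem_act.1 (hx hi), mem_act.1 (hy hi), sub_self]

open Classical in
/-- An objective `c` that is not constant along any edge direction induces an orientation. A vertex
maximising `c` on a face has the required property because a violating edge would stay in the face
and increase `c`. Conversely, expanding `c` in the normals at `B` shows that `x B` is the unique
maximiser of `c` on every face `S` with `J B ⊆ S ⊆ B`. -/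
lemma isOrientation_of_generic {a : ι → Module.Dual ℝ E} {b : ι → ℝ}
    (hrec : ∀ d, (∀ i, a i d ≤ 0) → d = 0)
    {x : Finset ι → E} {d : Finset ι → ι → E}
    (hx : ∀ B ∈ vertexSets a b, Feas a b (x B) ∧ act a b (x B) = B)
    (hd : ∀ B ∈ vertexSets a b, ∀ i ∈ B, ∀ j ∈ B, a j (d B i) = if i = j then 1 else 0)
    (hexp : ∀ B ∈ vertexSets a b, ∀ y, y = ∑ i ∈ B, a i y • d B i)
    (c : Module.Dual ℝ E) (hc : ∀ B ∈ vertexSets a b, ∀ i ∈ B, c (d B i) ≠ 0) :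
    IsOrientation (vertexSets a b) fun B => B.filter fun i => c (d B i) < 0 := by
  refine ⟨fun B _ => Finset.filter_subset _ _, fun S hS => ?_⟩
  have key : ∀ B ∈ vertexSets a b, ∀ B' ∈ vertexSets a b,
      (B.filter fun i => c (d B i) < 0) ⊆ B' →
      c (x B') ≤ c (x B) ∧ (c (x B') = c (x B) → B' = B) := by
    intro B hB B' hB' hsub
    have h1 : c (x B') - c (x B) = ∑ i ∈ B, (a i (x B') - b i) * c (d B i) := by
      rw [← map_sub]
      conv_lhs => rw [hexp B hB (x B' - x B)]
      rw [map_sum]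
      refine Finset.sum_congr rfl fun i hi => ?_
      rw [map_smul, smul_eq_mul, map_sub]
      rw [← (hx B hB).2, mem_act] at hi
      rw [hi]
    have h2 : ∀ i ∈ B, (a i (x B') - b i) * c (d B i) ≤ 0 := by
      intro i hi
      rcases lt_or_ge (c (d B i)) 0 with h | h
      · have : i ∈ B' := hsub (by simp [hi, h])
        rw [← (hx B' hB').2, mem_act] at this
        simp [this]
      · exact mul_nonpos_of_nonpos_of_nonneg (sub_nonpos.2 ((hx B' hB').1 i)) h
    refine ⟨sub_nonpos.1 (h1 ▸ Finset.sum_nonpos h2), fun heq => ?_⟩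
    rw [heq, sub_self, eq_comm, Finset.sum_eq_zero_iff_of_nonpos h2] at h1
    have h3 : B ⊆ act a b (x B') := by
      intro i hi
      rw [mem_act]
      have := (mul_eq_zero.1 (h1 i hi)).resolve_right (hc B hB i hi)
      linarith
    have h4 := (mem_vertexSets.1 hB).1.eq_of_act h3 (hx B hB).2.ge
    rw [← (hx B hB).2, ← h4, (hx B' hB').2]
  refine existsUnique_of_exists_of_unique ?_ ?_
  · obtain ⟨B₀, hB₀, hSB₀⟩ := hS
    obtain ⟨B, hB, hmax⟩ := Finset.exists_max_image ((vertexSets a b).filter fun B => S ⊆ B)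
      (fun B => c (x B)) ⟨B₀, by simp [hB₀, hSB₀]⟩
    rw [Finset.mem_filter] at hB
    obtain ⟨hB, hSB⟩ := hB
    refine ⟨B, hB, ?_, hSB⟩
    intro i hi
    rw [Finset.mem_filter] at hi
    by_contra hiS
    -- Leaving facet `i` along its edge would increase `c` while staying on the face `S`.
    have hev : ∀ᶠ ε in 𝓝[>] (0 : ℝ), ∀ j, j ∉ B → 0 < (b j - a j (x B)) + ε * a j (d B i) := by
      rw [eventually_all]
      intro j
      by_cases hj : j ∈ B
      · exact Eventually.of_forall fun ε h => absurd hj h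
      · refine (eventually_pos _ _ ?_).mono fun ε h _ => h
        refine sub_pos.2 (lt_of_le_of_ne ((hx B hB).1 j) fun h => hj ?_)
        rw [← (hx B hB).2, mem_act, h]
    obtain ⟨ε, hε, hε0⟩ := (hev.and self_mem_nhdsWithin).exists
    have hε0 : 0 < ε := hε0
    have hval : ∀ j ∈ B, a j (x B - ε • d B i) = b j - if i = j then ε else 0 := by
      intro j hj
      rw [map_sub, map_smul, hd B hB i hi.1 j hj, smul_eq_mul]
      rw [← (hx B hB).2, mem_act] at hj
      rw [hj]
      split_ifs <;> simp
    have hfeas : Feas a b (x B - ε • d B i) := by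
      intro j
      by_cases hj : j ∈ B
      · rw [hval j hj]
        split_ifs <;> linarith
      · have := hε j hj
        rw [map_sub, map_smul, smul_eq_mul]
        linarith
    obtain ⟨y, h1, h2, h3, h4⟩ := exists_vertex a b c
      (fun d hd0 hd => absurd (hrec d hd) hd0) _ hfeas
    have hyB : act a b y ∈ vertexSets a b := mem_vertexSets.2 ⟨h3, y, h1, rfl⟩
    have hS' : S ⊆ act a b y := by
      refine fun j hj => h2 ?_
      rw [mem_act, hval j (hSB hj), if_neg (by rintro rfl; exact hiS hj), sub_zero]
    have h5 := hmax (act a b y) (by simp [hyB, hS'])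
    rw [h3.eq_of_act (hx _ hyB).2.ge subset_rfl] at h5
    rw [map_sub, map_smul, smul_eq_mul] at h4
    nlinarith [hi.2]
  · rintro B B' ⟨hB, h1, h2⟩ ⟨hB', h1', h2'⟩
    have k1 := key B hB B' hB' (h1.trans h2')
    have k2 := key B' hB' B hB (h1'.trans h2)
    exact k2.2 (le_antisymm k2.1 k1.1)

/-- The upper bound theorem for simple bounded polyhedra. -/
theorem simple_bound [FiniteDimensional ℝ E] {a : ι → Module.Dual ℝ E} {b : ι → ℝ} {N : ℕ}
    (hN : 2 ≤ N) (hdim : Module.finrank ℝ E = N)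
    (hrec : ∀ d, (∀ i, a i d ≤ 0) → d = 0)
    (hsimple : ∀ x, Feas a b x → Indep a (act a b x)) (hne : ∃ x, Feas a b x) :
    ∃ e q : ℕ, (N = 2 * q + 1 ∧ Fintype.card ι = 2 * q + 2 + e ∧
        (vertexSets a b).card ≤ 2 * (e + q + 1).choose q) ∨
      (N = 2 * q ∧ 1 ≤ q ∧ Fintype.card ι = 2 * q + 1 + e ∧
        (vertexSets a b).card ≤ (e + q + 1).choose q + (e + q).choose (q - 1)) := by
  classical
  have hex : ∀ B ∈ vertexSets a b, ∃ (x : E) (d : ι → E), (Feas a b x ∧ act a b x = B) ∧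
      (∀ i ∈ B, ∀ j ∈ B, a j (d i) = if i = j then 1 else 0) ∧
      (∀ y, y = ∑ i ∈ B, a i y • d i) ∧ B.card = N := by
    intro B hB
    obtain ⟨hsep, x, hx, rfl⟩ := mem_vertexSets.1 hB
    obtain ⟨h1, d, h2, h3⟩ := exists_dirs hsep (hsimple x hx)
    exact ⟨x, d, ⟨hx, rfl⟩, h2, h3, h1.trans hdim⟩
  choose! x d hx hd hexp hcard using hex
  obtain ⟨c, hc⟩ := Module.exists_dual_forall_apply_ne_zero (K := ℝ)
    (fun p : {p : Finset ι × ι // p.1 ∈ vertexSets a b ∧ p.2 ∈ p.1} => d p.1.1 p.1.2) (by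
      rintro ⟨⟨B, i⟩, hB, hi⟩ h0
      have := hd B hB i hi i hi
      simp only at h0
      rw [h0] at this
      simp at this)
  have hc : ∀ B ∈ vertexSets a b, ∀ i ∈ B, c (d B i) ≠ 0 :=
    fun B hB i hi => hc ⟨⟨B, i⟩, hB, hi⟩
  refine card_le_of_orientations hN ?_ hcard (isOrientation_of_generic hrec hx hd hexp c hc)
    (isOrientation_of_generic hrec hx hd hexp (-c) fun B hB i hi => by simp [hc B hB i hi])
    ?_ ?_
  · obtain ⟨x, hx⟩ := hne
    obtain ⟨y, h1, -, h2, -⟩ := exists_vertex a b 0 (fun d hd0 hd => absurd (hrec d hd) hd0) x hx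
    exact ⟨_, mem_vertexSets.2 ⟨h2, y, h1, rfl⟩⟩
  · intro B hB
    ext i
    simp only [Finset.mem_filter, Finset.mem_sdiff, LinearMap.neg_apply, neg_lt_zero, not_and,
      not_lt]
    refine and_congr_right fun hi => ⟨fun h _ => h.le, fun h => (h hi).lt_of_ne (hc B hB i hi).symm⟩
  · intro j
    -- For small `ε`, the objective `a j + ε • c` is dominated by `a j`; on facet `j` it
    -- agrees with `c` up to scaling, and no edge leaving facet `j` increases it.
    have hev : ∀ᶠ ε in 𝓝[>] (0 : ℝ), ∀ B i, B ∈ vertexSets a b → i ∈ B →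
        a j (d B i) + ε * c (d B i) ≠ 0 ∧ 0 < 1 + ε * c (d B i) := by
      rw [eventually_all]
      intro B
      rw [eventually_all]
      intro i
      by_cases hB : B ∈ vertexSets a b
      · by_cases hi : i ∈ B
        · filter_upwards [eventually_ne_zero (a j (d B i)) _ (hc B hB i hi),
            eventually_pos 1 (c (d B i)) one_pos] with ε h1 h2 _ _
          exact ⟨h1, h2⟩
        · exact Eventually.of_forall fun ε _ h => absurd h hi
      · exact Eventually.of_forall fun ε h => absurd h hB
    obtain ⟨ε, hε, hε0⟩ := (hev.and self_mem_nhdsWithin).exists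
    have hε0 : 0 < ε := hε0
    refine ⟨_, isOrientation_of_generic hrec hx hd hexp (a j + ε • c) ?_, ?_⟩
    · intro B hB i hi
      simpa using (hε B i hB hi).1
    · intro B hB hj
      ext i
      simp only [Finset.mem_filter, Finset.mem_erase, LinearMap.add_apply, LinearMap.smul_apply,
        smul_eq_mul]
      by_cases hi : i ∈ B
      · rw [hd B hB i hi j hj]
        by_cases hij : i = j
        · subst hij
          simp only [hi, if_true, ne_eq, not_true, false_and, iff_false, true_and, not_lt]
          exact (hε B i hB hi).2.le
        · simp only [hij, hi, if_false, zero_add, true_and, ne_eq, not_false_iff]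
          exact ⟨fun h => by by_contra hh; nlinarith, fun h => by nlinarith⟩
      · simp [hi]

end Polyhedra

/-! ### Reduction to simple polyhedra by perturbing the right-hand sides -/

/-- The inequalities tight at `v` form, after translating `v` to `0` and relaxing them by `t > 0`, a
polyhedron containing `0`. It may be unbounded, but it has a vertex because the sum of its normals
is bounded above on it. Scaling that vertex by a small `ε` gives the vertex near `v` of the
perturbed polyhedron. -/
lemma exists_local_vertex {ι E : Type*} [AddCommGroup E] [Module ℝ E]
    {a : ι → Module.Dual ℝ E} {t : ι → ℝ} (ht : ∀ i, 0 < t i)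
    {A : Finset ι} (hA : Separates a A) :
    ∃ y, (∀ i ∈ A, a i y ≤ t i) ∧ ∀ d, (∀ i ∈ A, a i y = t i → a i d = 0) → d = 0 := by
  obtain ⟨y, h1, -, h2, -⟩ := exists_vertex (fun i : A => a i) (fun i : A => t i)
    (∑ i : A, a i) (by
      intro d hd0 hd
      rw [LinearMap.sum_apply]
      refine lt_of_le_of_ne (Finset.sum_nonpos fun i _ => hd i) fun h => hd0 ?_
      rw [Finset.sum_eq_zero_iff_of_nonpos fun i _ => hd i] at h
      exact hA d fun i hi => h ⟨i, hi⟩ (Finset.mem_univ _)) 0 (fun i => by simpa using (ht i).le)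
  refine ⟨y, fun i hi => h1 ⟨i, hi⟩, fun d hd => h2 d fun i hi => ?_⟩
  have hti := mem_act.1 hi
  exact hd i i.2 hti

section Perturbation

variable {ι E : Type*} [Fintype ι] [AddCommGroup E] [Module ℝ E]

lemma eventually_ne_zero' (α β : ℝ) (h : α ≠ 0) : ∀ᶠ ε in 𝓝[>] (0 : ℝ), α + ε * β ≠ 0 := by
  by_cases hβ : β = 0
  · exact Eventually.of_forall fun ε => by simpa [hβ] using h
  · exact eventually_ne_zero α β hβ

/-- `t` is positive and avoids the finitely many hyperplanes `∑ i ∈ A, μ A i * t i = 0`. -/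
lemma exists_generic_rhs (μ : Finset ι → ι → ℝ) (D : Finset ι → Prop)
    (hμ : ∀ A, D A → ∃ i ∈ A, μ A i ≠ 0) :
    ∃ t : ι → ℝ, (∀ i, 0 < t i) ∧ ∀ A, D A → ∑ i ∈ A, μ A i * t i ≠ 0 := by
  classical
  obtain ⟨f, hf⟩ := Module.exists_dual_forall_apply_ne_zero (K := ℝ)
    (fun A : {A : Finset ι // D A} => fun i => if i ∈ A.1 then μ A i else 0) (by
      rintro ⟨A, hA⟩ h0
      obtain ⟨i, hi, hne⟩ := hμ A hA
      have := congr_fun h0 i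
      simp [hi, hne] at this)
  have hf' : ∀ A, D A → ∑ i ∈ A, μ A i * f (Pi.single i 1) ≠ 0 := by
    intro A hA
    have := hf ⟨A, hA⟩
    rw [LinearMap.pi_apply_eq_sum_univ f] at this
    convert this using 1
    simp only [smul_eq_mul, ite_mul, zero_mul, Finset.sum_ite_mem, Finset.univ_inter]
    refine Finset.sum_congr rfl fun i _ => ?_
    congr 2
    ext k
    simp [Pi.single_apply, eq_comm]
  have hev : ∀ᶠ ε in 𝓝[>] (0 : ℝ), (∀ i, 0 < 1 + ε * f (Pi.single i 1)) ∧
      ∀ A, D A → ∑ i ∈ A, μ A i + ε * ∑ i ∈ A, μ A i * f (Pi.single i 1) ≠ 0 := by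
    refine Eventually.and ?_ ?_
    · rw [eventually_all]
      exact fun i => eventually_pos _ _ one_pos
    · rw [eventually_all]
      intro A
      by_cases hA : D A
      · exact (eventually_ne_zero _ _ (hf' A hA)).mono fun ε h _ => h
      · exact Eventually.of_forall fun ε h => absurd h hA
  obtain ⟨ε, h1, h2⟩ := hev.exists
  refine ⟨fun i => 1 + ε * f (Pi.single i 1), h1, fun A hA => ?_⟩
  convert h2 A hA using 1
  rw [Finset.mul_sum, ← Finset.sum_add_distrib]
  exact Finset.sum_congr rfl fun i _ => by ring

/-- Each point `v` of `V` moves to a vertex `v + ε • y v` of the polyhedron with right-hand sides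
`b + ε t`. For generic `t` and small `ε` the perturbed polyhedron is simple: a dependent set of
normals that is tight at some point would force a linear relation among the right-hand sides. -/
theorem exists_simple_perturbation {a : ι → Module.Dual ℝ E} {b : ι → ℝ}
    (hrec : ∀ d, (∀ i, a i d ≤ 0) → d = 0) (V : Finset E)
    (hV : ∀ v ∈ V, Feas a b v ∧ Separates a (act a b v)) :
    ∃ b' : ι → ℝ, (∀ x, Feas a b' x → Indep a (act a b' x)) ∧
      V.card ≤ (vertexSets a b').card := by
  classical
  have hdep : ∀ A : Finset ι, ¬ Indep a A →
      ∃ μ : ι → ℝ, ∑ i ∈ A, μ i • a i = 0 ∧ ∃ i ∈ A, μ i ≠ 0 := by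
    intro A hA
    simp only [Indep, not_forall] at hA
    obtain ⟨μ, h1, i, hi, h2⟩ := hA
    exact ⟨μ, h1, i, hi, h2⟩
  choose! μ hμ0 hμ1 using hdep
  obtain ⟨t, htpos, ht⟩ := exists_generic_rhs μ (fun A => ¬ Indep a A) hμ1
  have hloc : ∀ v ∈ V, ∃ y, (∀ i ∈ act a b v, a i y ≤ t i) ∧
      ∀ d, (∀ i ∈ act a b v, a i y = t i → a i d = 0) → d = 0 :=
    fun v hv => exists_local_vertex htpos (hV v hv).2
  choose! y hy1 hy2 using hloc
  have hev : ∀ᶠ ε in 𝓝[>] (0 : ℝ),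
      (∀ A, ¬ Indep a A → ∑ i ∈ A, μ A i * b i + ε * ∑ i ∈ A, μ A i * t i ≠ 0) ∧
      (∀ v ∈ V, ∀ i, i ∉ act a b v → 0 < (b i - a i v) + ε * (t i - a i (y v))) ∧
      (∀ v ∈ V, ∀ w ∈ V, v ≠ w → v + ε • y v ≠ w + ε • y w) := by
    refine Eventually.and ?_ (Eventually.and ?_ ?_)
    · rw [eventually_all]
      intro A
      by_cases hA : Indep a A
      · exact Eventually.of_forall fun ε h => absurd hA h
      · exact (eventually_ne_zero _ _ (ht A hA)).mono fun ε h _ => h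
    · rw [eventually_all_finset]
      intro v hv
      rw [eventually_all]
      intro i
      by_cases hi : i ∈ act a b v
      · exact Eventually.of_forall fun ε h => absurd hi h
      · refine (eventually_pos _ _ ?_).mono fun ε h _ => h
        exact sub_pos.2 (lt_of_le_of_ne ((hV v hv).1 i) fun h => hi (mem_act.2 h))
    · rw [eventually_all_finset]
      intro v hv
      rw [eventually_all_finset]
      intro w hw
      by_cases hvw : v = w
      · exact Eventually.of_forall fun ε h => absurd hvw h
      · obtain ⟨i, hi⟩ : ∃ i, a i (v - w) ≠ 0 := by
          by_contra! hcon
          exact hvw (sub_eq_zero.1 (hrec _ fun i => (hcon i).le))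
        refine (eventually_ne_zero' _ (a i (y v - y w)) hi).mono fun ε h _ heq => h ?_
        rw [← smul_eq_mul, ← map_smul, ← map_add]
        have : v - w + ε • (y v - y w) = (v + ε • y v) - (w + ε • y w) := by
          rw [smul_sub]; abel
        rw [this, heq, sub_self, map_zero]
  obtain ⟨ε, ⟨h1, h2, h3⟩, hε0⟩ := (hev.and self_mem_nhdsWithin).exists
  have hε0 : 0 < ε := hε0
  refine ⟨fun i => b i + ε * t i, ?_, ?_⟩
  · intro x hx
    by_contra hA
    apply h1 _ hA
    have := congr_arg (fun f : Module.Dual ℝ E => f x) (hμ0 _ hA)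
    simp only [LinearMap.sum_apply, LinearMap.smul_apply, LinearMap.zero_apply,
      smul_eq_mul] at this
    rw [← this, Finset.mul_sum, ← Finset.sum_add_distrib]
    refine Finset.sum_congr rfl fun i hi => ?_
    rw [mem_act.1 hi]
    ring
  · have hsep : ∀ v ∈ V, Separates a (act a (fun i => b i + ε * t i) (v + ε • y v)) := by
      intro v hv d hd
      refine hy2 v hv d fun i hi hti => hd i ?_
      rw [mem_act, map_add, map_smul, mem_act.1 hi, hti, smul_eq_mul]
    have hfeas : ∀ v ∈ V, Feas a (fun i => b i + ε * t i) (v + ε • y v) := by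
      intro v hv i
      rw [map_add, map_smul, smul_eq_mul]
      by_cases hi : i ∈ act a b v
      · rw [mem_act.1 hi]
        have := mul_le_mul_of_nonneg_left (hy1 v hv i hi) hε0.le
        linarith
      · have := h2 v hv i hi
        linarith
    refine Finset.card_le_card_of_injOn
      (fun v => act a (fun i => b i + ε * t i) (v + ε • y v)) ?_ ?_
    · intro v hv
      exact mem_vertexSets.2 ⟨hsep v hv, _, hfeas v hv, rfl⟩
    · intro v hv w hw hvw
      by_contra hne
      exact h3 v hv w hw hne ((hsep v hv).eq_of_act subset_rfl hvw.subset)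

/-- The upper bound theorem for the number of vertices of a bounded polyhedron given by
`Fintype.card ι` inequalities, with `e` the excess of that number over `N + 1`. -/
theorem polyhedron_bound [FiniteDimensional ℝ E] {a : ι → Module.Dual ℝ E} {b : ι → ℝ} {N : ℕ}
    (hN : 2 ≤ N) (hdim : Module.finrank ℝ E = N)
    (hrec : ∀ d, (∀ i, a i d ≤ 0) → d = 0) (V : Finset E) (hVne : V.Nonempty)
    (hV : ∀ v ∈ V, Feas a b v ∧ Separates a (act a b v)) :
    ∃ e q : ℕ, (N = 2 * q + 1 ∧ Fintype.card ι = 2 * q + 2 + e ∧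
        V.card ≤ 2 * (e + q + 1).choose q) ∨
      (N = 2 * q ∧ 1 ≤ q ∧ Fintype.card ι = 2 * q + 1 + e ∧
        V.card ≤ (e + q + 1).choose q + (e + q).choose (q - 1)) := by
  obtain ⟨b', hs, hcard⟩ := exists_simple_perturbation hrec V hV
  have hne : ∃ x, Feas a b' x := by
    obtain ⟨B, hB⟩ := Finset.card_pos.1 ((Finset.card_pos.2 hVne).trans_le hcard)
    obtain ⟨-, x, hx, -⟩ := mem_vertexSets.1 hB
    exact ⟨x, hx⟩
  obtain ⟨e, q, h | h⟩ := simple_bound hN hdim hrec hs hne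
  · exact ⟨e, q, Or.inl ⟨h.1, h.2.1, hcard.trans h.2.2⟩⟩
  · exact ⟨e, q, Or.inr ⟨h.1, h.2.1, h.2.2.1, hcard.trans h.2.2.2⟩⟩

end Perturbation

/-! ### Comparison with `Lam` -/

lemma choose_ratio {n k : ℕ} (hk : k < n)
    (h : (n - k) * (n - k - 1) ≤ (k + 1) * n) : (n - 1).choose (k + 1) ≤ n.choose k := by
  obtain ⟨p, rfl⟩ := Nat.exists_eq_add_of_lt hk
  have h1 : k + p + 1 - k = p + 1 := by omega
  have h2 : k + p + 1 - k - 1 = p := by omega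
  rw [h2, h1] at h
  have e1 : (k + p + 1) * (k + p).choose k = (k + p + 1).choose k * (p + 1) := by
    have := Nat.add_one_mul_choose_eq (k + p) p
    rw [Nat.choose_symm_add, this, ← Nat.choose_symm_of_eq_add (n := k + p + 1) (a := k) (b := p + 1) (by ring)]
  have e2 : (k + p).choose (k + 1) * (k + 1) = (k + p).choose k * p := by
    have := Nat.choose_succ_right_eq (k + p) k
    simpa using this
  simp only [Nat.add_sub_cancel]
  refine le_of_mul_le_mul_left (?_ : (k + 1) * (k + p + 1) * _ ≤ (k + 1) * (k + p + 1) * _)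
    (by positivity)
  calc (k + 1) * (k + p + 1) * (k + p).choose (k + 1)
      = (k + p + 1) * ((k + p).choose (k + 1) * (k + 1)) := by ring
    _ = ((k + p + 1) * (k + p).choose k) * p := by rw [e2]; ring
    _ = ((p + 1) * p) * (k + p + 1).choose k := by rw [e1]; ring
    _ ≤ ((k + 1) * (k + p + 1)) * (k + p + 1).choose k := Nat.mul_le_mul_right _ h

/-- `r₁₁ m` is the smaller root of the quadratic in `r` expressing `h₁ m (r + 1) ≤ h₁ m r`. Beyond
`r = m / 2`, in particular past the larger root, `h₁ m (r + 1)` vanishes. -/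
lemma h₁_succ_le (m r : ℕ) (hr : r₁₁ m ≤ r) : h₁ m (r + 1) ≤ h₁ m r := by
  unfold h₁
  rcases lt_or_ge r (m - r) with hlt | hge
  · rw [← Nat.sub_sub]
    refine choose_ratio hlt ?_
    obtain ⟨p, rfl⟩ : ∃ p, m = 2 * r + p + 1 := ⟨m - 2 * r - 1, by omega⟩
    have h1 : 2 * r + p + 1 - r = r + p + 1 := by omega
    have h2 : r + p + 1 - r = p + 1 := by omega
    rw [h1, h2, Nat.add_sub_cancel]
    rw [r₁₁, div_le_iff₀ (by norm_num)] at hr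
    have h3 : 5 * ((2 * r + p + 1 : ℕ) : ℝ) - 3 - r * 10 ≤
      Real.sqrt (5 * ((2 * r + p + 1 : ℕ) : ℝ) ^ 2 + 10 * ((2 * r + p + 1 : ℕ) : ℝ) + 9) := by linarith
    have h4 := Real.sq_sqrt (x := 5 * ((2 * r + p + 1 : ℕ) : ℝ) ^ 2 + 10 * ((2 * r + p + 1 : ℕ) : ℝ) + 9) (by positivity)
    have h5 : 0 ≤ 5 * ((2 * r + p + 1 : ℕ) : ℝ) - 3 - r * 10 := by
      push_cast
      have : (0 : ℝ) ≤ p := Nat.cast_nonneg _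
      linarith
    have h6 := pow_le_pow_left₀ h5 h3 2
    rw [h4] at h6
    push_cast at h6
    have : ((p : ℝ) + 1) * p ≤ (r + 1) * (r + p + 1) := by nlinarith
    exact_mod_cast this
  · rw [Nat.choose_eq_zero_of_lt (by omega)]
    exact Nat.zero_le _

/-- `r₂₁ m` plays for `h₂` the role of `r₁₁ m` in `h₁_succ_le`. The hypothesis `1 ≤ r` excludes the
truncated subtraction in `h₂ m 0`. -/
lemma h₂_succ_le (m r : ℕ) (hr0 : 1 ≤ r) (hr : r₂₁ m ≤ r) : h₂ m (r + 1) ≤ h₂ m r := by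
  unfold h₂
  obtain ⟨k, rfl⟩ := Nat.exists_eq_add_of_le' hr0
  rcases lt_or_ge k (m - (k + 1)) with hlt | hge
  · rw [← Nat.sub_sub]
    simp only [Nat.add_sub_cancel]
    refine choose_ratio hlt ?_
    obtain ⟨p, rfl⟩ : ∃ p, m = 2 * k + p + 2 := ⟨m - 2 * k - 2, by omega⟩
    have h1 : 2 * k + p + 2 - (k + 1) = k + p + 1 := by omega
    have h2 : k + p + 1 - k = p + 1 := by omega
    rw [h1, h2, Nat.add_sub_cancel]
    rw [r₂₁, div_le_iff₀ (by norm_num)] at hr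
    set M : ℝ := ((2 * k + p + 2 : ℕ) : ℝ) with hM
    push_cast at hr hM
    have h3 : 5 * M + 2 - (k + 1) * 10 ≤ Real.sqrt (5 * M ^ 2 + 4) := by linarith
    have h4 := Real.sq_sqrt (x := 5 * M ^ 2 + 4) (by positivity)
    have h5 : 0 ≤ 5 * M + 2 - (k + 1) * 10 := by
      have : (0 : ℝ) ≤ p := Nat.cast_nonneg _
      linarith
    have h6 := pow_le_pow_left₀ h5 h3 2
    rw [h4, hM] at h6
    have : ((p : ℝ) + 1) * p ≤ (k + 1) * (k + p + 1) := by nlinarith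
    exact_mod_cast this
  · rw [Nat.choose_eq_zero_of_lt (by omega)]
    exact Nat.zero_le _

/-- Either `N / 2 ≤ ⌊r₁₁ m⌋₊`, and `h₁ m (N / 2)` is one of the two values, or `⌈r₁₁ m⌉₊ ≤ N / 2` and
`h₁ m` is antitone from `⌈r₁₁ m⌉₊` on. -/
lemma h₁_le_h₁₁₁ (N m : ℕ) : h₁ m (N / 2) ≤ h₁₁₁ N m := by
  unfold h₁₁₁
  rcases le_or_gt (N / 2) ⌊r₁₁ m⌋₊ with h | h
  · rw [min_eq_right h]
    exact le_max_left _ _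
  · have h' : ⌈r₁₁ m⌉₊ ≤ N / 2 := (Nat.ceil_le_floor_add_one _).trans h
    rw [min_eq_left h']
    refine le_trans ?_ (le_max_right _ _)
    generalize N / 2 = q at h'
    induction q, h' using Nat.le_induction with
    | base => rfl
    | succ r hr ih => exact (h₁_succ_le m r (Nat.ceil_le.1 hr)).trans ih

lemma h₂_le_h₂₂₁ (N m : ℕ) (hm : 1 ≤ m) : h₂ m (N / 2) ≤ h₂₂₁ N m := by
  unfold h₂₂₁
  rcases le_or_gt (N / 2) ⌊r₂₁ m⌋₊ with h | h
  · rw [min_eq_right h]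
    exact le_max_left _ _
  · have h' : ⌈r₂₁ m⌉₊ ≤ N / 2 := (Nat.ceil_le_floor_add_one _).trans h
    rw [min_eq_left h']
    refine le_trans ?_ (le_max_right _ _)
    have h0 : 1 ≤ ⌈r₂₁ m⌉₊ := by
      rw [Nat.one_le_ceil_iff, r₂₁]
      refine div_pos (sub_pos.2 ?_) (by norm_num)
      have hm' : (1 : ℝ) ≤ m := by exact_mod_cast hm
      rw [Real.sqrt_lt' (by positivity)]
      nlinarith
    generalize N / 2 = q at h'
    induction q, h' using Nat.le_induction with
    | base => rfl
    | succ r hr ih => exact (h₂_succ_le m r (h0.trans hr) (Nat.ceil_le.1 hr)).trans ih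

lemma le_Lam {N m n : ℕ} (h : ∃ e q : ℕ, (N = 2 * q + 1 ∧ m = 2 * q + 2 + e ∧
        n ≤ 2 * (e + q + 1).choose q) ∨
      (N = 2 * q ∧ 1 ≤ q ∧ m = 2 * q + 1 + e ∧
        n ≤ (e + q + 1).choose q + (e + q).choose (q - 1))) : n ≤ Lam N m := by
  unfold Lam
  obtain ⟨e, q, ⟨rfl, rfl, h⟩ | ⟨rfl, hq, rfl, h⟩⟩ := h
  · refine h.trans (le_trans ?_ (le_max_left _ _))
    refine Nat.mul_le_mul_left _ (le_trans (le_of_eq ?_) (h₁_le_h₁₁₁ _ _))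
    rw [h₁, show (2 * q + 1) / 2 = q by omega]
    congr 1
    omega
  · refine h.trans (le_trans ?_ (le_max_right _ _))
    refine add_le_add (le_trans (le_of_eq ?_) (h₁_le_h₁₁₁ _ _))
      (le_trans (le_of_eq ?_) (h₂_le_h₂₂₁ _ _ (by omega)))
    · rw [h₁, show 2 * q / 2 = q by omega]
      congr 1
      omega
    · rw [h₂, show 2 * q / 2 = q by omega]
      congr 1
      omega

/-! ### Polytopes as intersections of the half-spaces of their facets -/

section Polytope

variable {E : Type*} [NormedAddCommGroup E] [NormedSpace ℝ E]

lemma lt_of_mem_interior {P : Set E} {g : E →ₗ[ℝ] ℝ} {c : ℝ} (hg : g ≠ 0)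
    (hle : ∀ x ∈ P, g x ≤ c) {x : E} (hx : x ∈ interior P) : g x < c := by
  obtain ⟨v, hv⟩ : ∃ v, 0 < g v := by
    by_contra! hcon
    refine hg (LinearMap.ext fun v => le_antisymm (hcon v) ?_)
    have := hcon (-v)
    rw [map_neg] at this
    simpa using this
  have hcont : Tendsto (fun ε : ℝ => x + ε • v) (𝓝 0) (𝓝 (x + (0 : ℝ) • v)) :=
    Continuous.tendsto (by fun_prop) 0
  rw [zero_smul, add_zero] at hcont
  have hev := (hcont.mono_left (nhdsWithin_le_nhds (s := Set.Ioi 0))).eventually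
    (mem_interior_iff_mem_nhds.1 hx)
  obtain ⟨ε, h1, h2⟩ := (hev.and self_mem_nhdsWithin).exists
  have h2 : 0 < ε := h2
  have := hle _ h1
  rw [map_add, map_smul, smul_eq_mul] at this
  nlinarith [mul_pos h2 hv]

/-- The face where `f` is maximal is spanned by the points of `S` on it. -/
lemma mem_convexHull_filter {S : Finset E} {f : E →ₗ[ℝ] ℝ} {z : E}
    (hz : z ∈ convexHull ℝ (S : Set E)) (hf : ∀ s ∈ S, f s ≤ f z) :
    z ∈ convexHull ℝ ((S.filter fun s => f s = f z : Finset E) : Set E) := by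
  rw [Finset.mem_convexHull'] at hz ⊢
  obtain ⟨w, hw0, hw1, hwz⟩ := hz
  have h1 : ∑ s ∈ S, w s * (f s - f z) = 0 := by
    have := congr_arg f hwz
    rw [map_sum] at this
    simp only [map_smul, smul_eq_mul] at this
    simp only [mul_sub, Finset.sum_sub_distrib, ← Finset.sum_mul, hw1, this]
    ring
  rw [Finset.sum_eq_zero_iff_of_nonpos fun s hs =>
    mul_nonpos_of_nonneg_of_nonpos (hw0 s hs) (sub_nonpos.2 (hf s hs))] at h1
  have h2 : ∀ s ∈ S, w s ≠ 0 → f s = f z := fun s hs hne =>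
    sub_eq_zero.1 ((mul_eq_zero.1 (h1 s hs)).resolve_left hne)
  refine ⟨w, fun s hs => hw0 s (Finset.mem_filter.1 hs).1, ?_, ?_⟩
  · rw [Finset.sum_filter_of_ne h2, hw1]
  · rw [Finset.sum_filter_of_ne fun s hs hne => h2 s hs fun h0 => hne (by rw [h0, zero_smul]), hwz]

lemma finrank_span_face_le [FiniteDimensional ℝ E] {F : Set E} {f : E →ₗ[ℝ] ℝ} (hf : f ≠ 0) {c : ℝ}
    (hF : ∀ x ∈ F, f x = c) :
    Module.finrank ℝ (vectorSpan ℝ F) + 1 ≤ Module.finrank ℝ E := by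
  have h1 : vectorSpan ℝ F ≤ LinearMap.ker f := by
    rw [vectorSpan_def, Submodule.span_le]
    rintro _ ⟨x, hx, y, hy, rfl⟩
    simp [hF x hx, hF y hy]
  have h2 := Module.Dual.finrank_ker_add_one_of_ne_zero (f := f) hf
  have h3 := Submodule.finrank_mono h1
  omega

lemma exists_generic_interior [FiniteDimensional ℝ E] {P : Set E} (hint : (interior P).Nonempty)
    {κ : Type*} [Finite κ] (A : κ → AffineSubspace ℝ E) (hA : ∀ k, A k ≠ ⊤) :
    ∃ x ∈ interior P, ∀ k, x ∉ A k := by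
  borelize E
  by_contra! hcon
  have h1 : interior P ⊆ ⋃ k, (A k : Set E) := fun x hx => Set.mem_iUnion.2 (hcon x hx)
  have h2 : MeasureTheory.Measure.addHaar (⋃ k, (A k : Set E)) = 0 :=
    MeasureTheory.measure_iUnion_null fun k => MeasureTheory.Measure.addHaar_affineSubspace _ _ (hA k)
  exact (isOpen_interior.measure_pos MeasureTheory.Measure.addHaar hint).ne'
    (MeasureTheory.measure_mono_null h1 h2)

/-- The segment from `x` to `y` leaves `P` at a boundary point. -/
lemma exists_exit_point {P : Set E} (hP : IsCompact P) {x y : E} (hx : x ∈ P) (hy : y ∉ P) :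
    ∃ t : ℝ, 0 ≤ t ∧ t < 1 ∧ x + t • (y - x) ∈ P ∧ x + t • (y - x) ∉ interior P := by
  have hcont : Continuous fun t : ℝ => x + t • (y - x) := by fun_prop
  have hK : IsCompact (Set.Icc (0 : ℝ) 1 ∩ (fun t : ℝ => x + t • (y - x)) ⁻¹' P) :=
    isCompact_Icc.inter_right (hP.isClosed.preimage hcont)
  obtain ⟨t, ⟨ht, htP⟩, hmax⟩ := hK.exists_isMaxOn ⟨0, by simp [hx]⟩ continuousOn_id
  have ht1 : t < 1 := by
    refine lt_of_le_of_ne ht.2 ?_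
    rintro rfl
    simp only [Set.mem_preimage, one_smul, add_sub_cancel] at htP
    exact hy htP
  refine ⟨t, ht.1, ht1, htP, fun hin => ?_⟩
  have hev : ∀ᶠ s in 𝓝[>] t, x + s • (y - x) ∈ P :=
    (hcont.tendsto t).mono_left nhdsWithin_le_nhds |>.eventually
      (mem_interior_iff_mem_nhds.1 hin)
  obtain ⟨s, ⟨h1, h2⟩, h3⟩ := ((hev.and self_mem_nhdsWithin).and
    (nhdsWithin_le_nhds (Iic_mem_nhds ht1))).exists
  have h2 : t < s := h2
  have : s ≤ t := hmax ⟨⟨ht.1.trans h2.le, h3⟩, h1⟩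
  linarith

end Polytope

/-- A point `y` outside `P` violates the inequality of some facet. Choose `x` in the interior such
that the segment from `x` to `y` misses the affine hulls of dimension at most `N - 2` spanned by
points of `S`, and take a supporting hyperplane at the point where the segment leaves `P`. The face
it cuts out is spanned by points of `S`, so by the choice of `x` it is a facet. The conclusion
covers every functional `g` defining this facet. -/
lemma exists_facet_separating {N : ℕ} (hN : 2 ≤ N) (S : Finset (EuclideanSpace ℝ (Fin N)))
    {P : Set (EuclideanSpace ℝ (Fin N))} (hP : P = convexHull ℝ (S : Set (EuclideanSpace ℝ (Fin N))))
    (hcompact : IsCompact P) (hconv : Convex ℝ P) (hint : (interior P).Nonempty)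
    {y : EuclideanSpace ℝ (Fin N)} (hy : y ∉ P) :
    ∃ F, IsFacet N P F ∧ ∀ (g : EuclideanSpace ℝ (Fin N) →ₗ[ℝ] ℝ) (c : ℝ), g ≠ 0 →
      (∀ x ∈ P, g x ≤ c) → F = P ∩ {x | g x = c} → c < g y := by
  have hdim : Module.finrank ℝ (EuclideanSpace ℝ (Fin N)) = N := finrank_euclideanSpace_fin
  obtain ⟨x, hx, hgen⟩ := exists_generic_interior hint
    (fun T : {T : S.powerset //
      Module.finrank ℝ (vectorSpan ℝ (T.1 : Set (EuclideanSpace ℝ (Fin N)))) + 2 ≤ N} =>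
      affineSpan ℝ (insert y (T.1.1 : Set (EuclideanSpace ℝ (Fin N))))) (by
    rintro ⟨⟨T, hT⟩, hT2⟩ htop
    dsimp only at hT2
    have h1 := finrank_vectorSpan_insert_le_set ℝ (T : Set (EuclideanSpace ℝ (Fin N))) y
    simp only at htop
    rw [← direction_affineSpan, htop, AffineSubspace.direction_top, finrank_top, hdim] at h1
    omega)
  obtain ⟨t, ht0, ht1, hzP, hzint⟩ := exists_exit_point hcompact (interior_subset hx) hy
  set z := x + t • (y - x) with hz
  obtain ⟨f, hf⟩ := geometric_hahn_banach_open_point hconv.interior isOpen_interior hzint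
  have hfP : ∀ p ∈ P, f p ≤ f z := by
    intro p hp
    have h1 : p ∈ closure (interior P) := by
      rw [hconv.closure_interior_eq_closure_of_nonempty_interior hint]
      exact subset_closure hp
    exact closure_minimal (fun q hq => (hf q hq).le)
      (isClosed_le f.continuous continuous_const) h1
  have hf0 : (f : EuclideanSpace ℝ (Fin N) →ₗ[ℝ] ℝ) ≠ 0 := by
    intro h0
    have h1 := hf x hx
    have h2 : ∀ v, f v = 0 := fun v => LinearMap.congr_fun h0 v
    rw [h2, h2] at h1
    exact lt_irrefl _ h1
  refine ⟨P ∩ {p | f p = f z}, ⟨⟨{p | f p = f z}, ⟨f, f z, hf0, rfl, hfP, z, hzP, rfl⟩, rfl⟩, ?_⟩, ?_⟩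
  · have h1 := finrank_span_face_le hf0 (F := P ∩ {p | f p = f z}) (c := f z) fun p hp => hp.2
    rw [direction_affineSpan]
    by_contra hne
    rw [hdim] at h1
    have hTF : ((S.filter fun s => f s = f z : Finset _) : Set (EuclideanSpace ℝ (Fin N))) ⊆
        P ∩ {p | f p = f z} := by
      intro s hs
      rw [Finset.mem_coe, Finset.mem_filter] at hs
      exact ⟨hP ▸ subset_convexHull ℝ _ hs.1, hs.2⟩
    have h2 := Submodule.finrank_mono (vectorSpan_mono ℝ hTF)
    refine hgen ⟨⟨S.filter fun s => f s = f z, by simp⟩, by simp only; omega⟩ ?_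
    have hzT := convexHull_subset_affineSpan _ (mem_convexHull_filter
      (f := (f : EuclideanSpace ℝ (Fin N) →ₗ[ℝ] ℝ)) (hP ▸ hzP)
      fun s hs => hfP s (hP ▸ subset_convexHull ℝ _ hs))
    have hz' : z ∈ affineSpan ℝ (insert y
        ((S.filter fun s => f s = f z : Finset _) : Set (EuclideanSpace ℝ (Fin N)))) :=
      affineSpan_mono ℝ (Set.subset_insert _ _) hzT
    have hy' : y ∈ affineSpan ℝ (insert y
        ((S.filter fun s => f s = f z : Finset _) : Set (EuclideanSpace ℝ (Fin N)))) :=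
      subset_affineSpan ℝ _ (Set.mem_insert _ _)
    have hxz : x = AffineMap.lineMap y z (1 - t)⁻¹ := by
      have h3 : (1 - t) ≠ 0 := by linarith
      rw [AffineMap.lineMap_apply, hz, vsub_eq_sub, vadd_eq_add]
      have h4 : x + t • (y - x) - y = (1 - t) • (x - y) := by module
      rw [h4, smul_smul, inv_mul_cancel₀ h3, one_smul, sub_add_cancel]
    have hx' := AffineMap.lineMap_mem (1 - t)⁻¹ hy' hz'
    rwa [← hxz] at hx'
  · intro g c hg hgP hF
    have h1 : g z = c := by
      have : z ∈ P ∩ {x | g x = c} := hF ▸ ⟨hzP, rfl⟩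
      exact this.2
    have h2 := lt_of_mem_interior hg hgP hx
    rw [hz, map_add, map_smul, map_sub, smul_eq_mul] at h1
    nlinarith

theorem vertex_count_upper_bound (N m : ℕ) (hN : 2 ≤ N) (hm : 3 ≤ m)
    (S : Finset (EuclideanSpace ℝ (Fin N)))
    (P : Set (EuclideanSpace ℝ (Fin N)))
    (hP : P = convexHull ℝ (S : Set (EuclideanSpace ℝ (Fin N))))
    (hcompact : IsCompact P) (hconv : Convex ℝ P)
    (hint : (interior P).Nonempty)
    (hfacets : {F : Set (EuclideanSpace ℝ (Fin N)) | IsFacet N P F}.ncard = m) :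
    (Set.extremePoints ℝ P).Finite ∧ (Set.extremePoints ℝ P).ncard ≤ Lam N m := by
  have hfin : (Set.extremePoints ℝ P).Finite :=
    S.finite_toSet.subset (hP ▸ extremePoints_convexHull_subset)
  refine ⟨hfin, ?_⟩
  -- `ncard` is nonzero, so the set of facets is finite.
  have hffin : {F : Set (EuclideanSpace ℝ (Fin N)) | IsFacet N P F}.Finite :=
    Set.finite_of_ncard_pos (by omega)
  have := hffin.fintype
  have hcardι : Fintype.card {F : Set (EuclideanSpace ℝ (Fin N)) | IsFacet N P F} = m := by
    rw [← hfacets, ← Nat.card_coe_set_eq, Nat.card_eq_fintype_card]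
  have hdata : ∀ F : {F : Set (EuclideanSpace ℝ (Fin N)) | IsFacet N P F},
      ∃ (g : Module.Dual ℝ (EuclideanSpace ℝ (Fin N))) (c : ℝ), g ≠ 0 ∧ (∀ x ∈ P, g x ≤ c) ∧
        F.1 = P ∩ {x | g x = c} := by
    rintro ⟨F, ⟨H, ⟨f, c, hf, rfl, hle, -⟩, hF⟩, -⟩
    exact ⟨f, c, hf, hle, hF⟩
  choose a b ha0 haP haF using hdata
  have hPoly : ∀ x, x ∈ P ↔ Feas a b x := by
    refine fun x => ⟨fun hx F => haP F x hx, fun hx => ?_⟩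
    by_contra hxP
    obtain ⟨F, hF, hsep⟩ := exists_facet_separating hN S hP hcompact hconv hint hxP
    exact absurd (hx ⟨F, hF⟩) (not_le.2 (hsep _ _ (ha0 ⟨F, hF⟩) (haP ⟨F, hF⟩) (haF ⟨F, hF⟩)))
  have hPne : P.Nonempty := hint.mono interior_subset
  -- Boundedness of `P` excludes recession directions.
  have hrec : ∀ d, (∀ F, a F d ≤ 0) → d = 0 := by
    intro d hd
    obtain ⟨x, hx⟩ := hPne
    by_contra hd0
    obtain ⟨R, hR⟩ := hcompact.isBounded.exists_norm_le
    have hmem : ∀ s : ℝ, 0 ≤ s → x + s • d ∈ P := by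
      intro s hs
      rw [hPoly] at hx ⊢
      intro F
      rw [map_add, map_smul, smul_eq_mul]
      have := mul_nonpos_of_nonneg_of_nonpos hs (hd F)
      linarith [hx F]
    have hdpos : 0 < ‖d‖ := norm_pos_iff.2 hd0
    have hR0 : 0 ≤ R := (norm_nonneg x).trans (hR x hx)
    have h1 := hR _ (hmem ((2 * R + 1) / ‖d‖) (by positivity))
    have h2 : ‖((2 * R + 1) / ‖d‖) • d‖ = 2 * R + 1 := by
      rw [norm_smul, Real.norm_of_nonneg (by positivity), div_mul_cancel₀ _ hdpos.ne']
    have h3 := norm_sub_le (x + ((2 * R + 1) / ‖d‖) • d) x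
    rw [add_sub_cancel_left, h2] at h3
    linarith [hR x hx]
  have hV : ∀ v ∈ hfin.toFinset, Feas a b v ∧ Separates a (act a b v) := by
    intro v hv
    rw [Set.Finite.mem_toFinset, mem_extremePoints] at hv
    have hvF := (hPoly v).1 hv.1
    refine ⟨hvF, fun d hd => ?_⟩
    -- If `d` is parallel to all tight facets, `v` is the midpoint of `v ± ε • d` in `P`.
    have hev : ∀ᶠ ε in 𝓝[>] (0 : ℝ), ∀ F, F ∉ act a b v →
        0 < (b F - a F v) + ε * a F d ∧ 0 < (b F - a F v) + ε * (-a F d) := by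
      rw [eventually_all]
      intro F
      by_cases hF : F ∈ act a b v
      · exact Eventually.of_forall fun ε h => absurd hF h
      · have hpos : 0 < b F - a F v := sub_pos.2 (lt_of_le_of_ne (hvF F) fun h => hF (mem_act.2 h))
        exact ((eventually_pos _ _ hpos).and (eventually_pos _ _ hpos)).mono fun ε h _ => h
    obtain ⟨ε, hε, hε0⟩ := (hev.and self_mem_nhdsWithin).exists
    have hε0 : 0 < ε := hε0
    have h1 : v + ε • d ∈ P := by
      rw [hPoly]
      intro F
      rw [map_add, map_smul, smul_eq_mul]
      by_cases hF : F ∈ act a b v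
      · rw [hd F hF, mul_zero, add_zero]; exact hvF F
      · linarith [(hε F hF).2]
    have h2 : v - ε • d ∈ P := by
      rw [hPoly]
      intro F
      rw [map_sub, map_smul, smul_eq_mul]
      by_cases hF : F ∈ act a b v
      · rw [hd F hF, mul_zero, sub_zero]; exact hvF F
      · linarith [(hε F hF).1]
    have h3 := (hv.2 _ h1 _ h2 ⟨1 / 2, 1 / 2, by norm_num, by norm_num, by norm_num, by module⟩).1
    exact (smul_eq_zero.1 (add_eq_left.1 h3)).resolve_left hε0.ne'
  have hVne : hfin.toFinset.Nonempty := by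
    rw [Set.Finite.toFinset_nonempty]
    exact hcompact.extremePoints_nonempty hPne
  rw [Set.ncard_eq_toFinset_card _ hfin]
  have := polyhedron_bound hN finrank_euclideanSpace_fin hrec _ hVne hV
  rw [hcardι] at this
  exact le_Lam this
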